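/- In every non-idempotent Kleene algebra, the denesting identities hold: for all elements p, q, (p + q)* = (p*·q)*·p* and (p + q)* = p*·(q·p*)*. -/

import Mathlib

/-!
Both unfoldings `1 + p * p⋆ = p⋆` and `1 + p⋆ * p = p⋆` hold as equations, so the induction laws
can be applied at equalities. Since `p⋆ * (q * p⋆)⋆` solves `1 + (p + q) * x = x`, induction gives
`(p + q)⋆ ≤ p⋆ * (q * p⋆)⋆`. Conversely, writing `s = (p + q)⋆`, two nested inductions reduce
`p⋆ * (q * p⋆)⋆ ≤ s` to `(1 + s * q) * p⋆ ≤ s` and then to `1 + s * q + s * p ≤ s`.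
The other identity is the left-right mirror image.
-/

/-- A non-idempotent Kleene algebra (NKA): a (not necessarily additively
idempotent) semiring equipped with a partial order preserved by `+` and `*`,
and a star operation satisfying `1 + p * p⋆ ≤ p⋆` and the two induction laws. -/
class NKA (K : Type*) extends Semiring K, PartialOrder K where
  star : K → K
  add_le_add' : ∀ {p q r s : K}, p ≤ q → r ≤ s → p + r ≤ q + s
  mul_le_mul' : ∀ {p q r s : K}, p ≤ q → r ≤ s → p * r ≤ q * s
  one_add_mul_star_le : ∀ p : K, 1 + p * star p ≤ star p
  star_ind_left : ∀ {p q r : K}, q + p * r ≤ r → star p * q ≤ r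
  star_ind_right : ∀ {p q r : K}, q + r * p ≤ r → q * star p ≤ r

postfix:max "⋆" => NKA.star

theorem NKA.one_add_mul_star {K : Type*} [NKA K] (p : K) : 1 + p * p⋆ = p⋆ := by
  refine le_antisymm (NKA.one_add_mul_star_le p) ?_
  have h : p⋆ * 1 ≤ 1 + p * p⋆ :=
    NKA.star_ind_left (NKA.add_le_add' le_rfl
      (NKA.mul_le_mul' le_rfl (NKA.one_add_mul_star_le p)))
  rwa [mul_one] at h

theorem NKA.one_add_star_mul {K : Type*} [NKA K] (p : K) : 1 + p⋆ * p = p⋆ := by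
  have hl := NKA.one_add_mul_star p
  apply le_antisymm
  · have h : p⋆ * p ≤ p * p⋆ := by
      apply NKA.star_ind_left
      apply le_of_eq
      calc p + p * (p * p⋆) = p * (1 + p * p⋆) := by rw [mul_add, mul_one]
        _ = p * p⋆ := by rw [hl]
    calc 1 + p⋆ * p ≤ 1 + p * p⋆ := NKA.add_le_add' le_rfl h
      _ = p⋆ := hl
  · have h : p⋆ * 1 ≤ 1 + p⋆ * p := by
      apply NKA.star_ind_left
      apply le_of_eq
      calc 1 + p * (1 + p⋆ * p) = 1 + (1 + p * p⋆) * p := by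
            rw [mul_add, add_mul, mul_one, one_mul, mul_assoc]
        _ = 1 + p⋆ * p := by rw [hl]
    rwa [mul_one] at h

/-- Denesting identities in any non-idempotent Kleene algebra. -/
theorem nka_denesting {K : Type*} [NKA K] (p q : K) :
    (p + q)⋆ = (p⋆ * q)⋆ * p⋆ ∧ (p + q)⋆ = p⋆ * (q * p⋆)⋆ := by
  constructor
  · apply le_antisymm
    · have h : 1 * (p + q)⋆ ≤ (p⋆ * q)⋆ * p⋆ := by
        apply NKA.star_ind_right
        apply le_of_eq
        calc 1 + (p⋆ * q)⋆ * p⋆ * (p + q)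
            = (1 + (p⋆ * q)⋆ * (p⋆ * q)) + (p⋆ * q)⋆ * (p⋆ * p) := by
              simp only [mul_add, mul_assoc]; abel
          _ = (p⋆ * q)⋆ * (1 + p⋆ * p) := by
              rw [NKA.one_add_star_mul (p⋆ * q), mul_add, mul_one]
          _ = (p⋆ * q)⋆ * p⋆ := by rw [NKA.one_add_star_mul p]
      rwa [one_mul] at h
    · apply NKA.star_ind_left
      have h : p⋆ * (1 + q * (p + q)⋆) ≤ (p + q)⋆ := by
        apply NKA.star_ind_left
        apply le_of_eq
        calc 1 + q * (p + q)⋆ + p * (p + q)⋆ = 1 + (p + q) * (p + q)⋆ := by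
              rw [add_mul]; abel
          _ = (p + q)⋆ := NKA.one_add_mul_star _
      rwa [mul_add, mul_one, ← mul_assoc] at h
  · apply le_antisymm
    · have h : (p + q)⋆ * 1 ≤ p⋆ * (q * p⋆)⋆ := by
        apply NKA.star_ind_left
        apply le_of_eq
        calc 1 + (p + q) * (p⋆ * (q * p⋆)⋆)
            = (1 + q * p⋆ * (q * p⋆)⋆) + p * p⋆ * (q * p⋆)⋆ := by
              simp only [add_mul, mul_assoc]; abel
          _ = (1 + p * p⋆) * (q * p⋆)⋆ := by
              rw [NKA.one_add_mul_star (q * p⋆), add_mul, one_mul]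
          _ = p⋆ * (q * p⋆)⋆ := by rw [NKA.one_add_mul_star p]
      rwa [mul_one] at h
    · apply NKA.star_ind_right
      have h : (1 + (p + q)⋆ * q) * p⋆ ≤ (p + q)⋆ := by
        apply NKA.star_ind_right
        apply le_of_eq
        calc 1 + (p + q)⋆ * q + (p + q)⋆ * p = 1 + (p + q)⋆ * (p + q) := by
              rw [mul_add]; abel
          _ = (p + q)⋆ := NKA.one_add_star_mul _
      rwa [add_mul, one_mul, mul_assoc] at h
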